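/- For every HyperLTL_temp formula ψ, every weighted Kripke structure K, and every lasso assignment Π (a trace assignment mapping each free variable of ψ to a lasso of K, i.e. Π(π) ∈ 𝕃(K) for all free variables π of ψ), the satisfaction value of ψ over the full trace set equals its satisfaction value over the lasso set: ⟦ψ⟧_Π^{𝕋(K)} = ⟦ψ⟧_Π^{𝕃(K)}. In particular, for every closed HyperLTL_temp formula ψ, ⟦ψ⟧^{𝕋(K)} = ⟦ψ⟧^{𝕃(K)}. -/

import Mathlib

open Set

noncomputable section

/-- A (weighted) trace assigns to each time step and atomic proposition a weight in `[0,1]`. -/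
abbrev Trace (AP : Type) : Type := ℕ → AP → unitInterval

/-- Boolean traces: all weights are `0` or `1`. -/
def IsBoolTrace {AP : Type} (t : Trace AP) : Prop :=
  ∀ i p, (t i p : ℝ) = 0 ∨ (t i p : ℝ) = 1

/-- Lassos: eventually periodic traces, i.e. traces of the form `u·v^ω`. -/
def IsLasso {AP : Type} (t : Trace AP) : Prop :=
  ∃ N c : ℕ, 0 < c ∧ ∀ n, N ≤ n → t (n + c) = t n

/-- Shifting a trace assignment: `Π[i,∞]`. -/
def shiftA {AP Var : Type} (ρ : Var → Trace AP) (i : ℕ) : Var → Trace AP :=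
  fun π n => ρ π (n + i)

/-- `prefMin g i = min_{0 ≤ j < i} g j` (with the empty minimum being `1`). -/
def prefMin (g : ℕ → ℝ) : ℕ → ℝ
  | 0 => 1
  | n + 1 => min (prefMin g n) (g n)

/-- A discounting sequence: strictly decreasing, with values in `[0,1]` and limit `0`. -/
def IsDiscounting (η : ℕ → ℝ) : Prop :=
  StrictAnti η ∧ (∀ i, η i ∈ Set.Icc (0:ℝ) 1) ∧
    Filter.Tendsto η Filter.atTop (nhds 0)

/-- Quantifier-free HyperLTL_temp formulas, over a set `D` (indexing the discounting
sequences). -/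
inductive TQF (AP Var D : Type) : Type where
  | atom : AP → Var → TQF AP Var D
  | neg : TQF AP Var D → TQF AP Var D
  | or : TQF AP Var D → TQF AP Var D → TQF AP Var D
  | next : TQF AP Var D → TQF AP Var D
  | untl : TQF AP Var D → TQF AP Var D → TQF AP Var D
  | untlD : D → TQF AP Var D → TQF AP Var D → TQF AP Var D

/-- HyperLTL_temp formulas: a prefix of quantifiers over a quantifier-free formula. -/
inductive TForm (AP Var D : Type) : Type where
  | qf : TQF AP Var D → TForm AP Var D
  | ex : Var → TForm AP Var D → TForm AP Var D
  | all : Var → TForm AP Var D → TForm AP Var D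

variable {AP Var D : Type}

/-- Satisfaction value of quantifier-free HyperLTL_temp formulas, where `η` interprets the
discounting sequence indices. -/
def tsemQF (η : D → ℕ → ℝ) : TQF AP Var D → (Var → Trace AP) → Set (Trace AP) → ℝ
  | .atom p π, ρ, _ => (ρ π 0 p : ℝ)
  | .neg φ, ρ, T => 1 - tsemQF η φ ρ T
  | .or φ₁ φ₂, ρ, T => max (tsemQF η φ₁ ρ T) (tsemQF η φ₂ ρ T)
  | .next φ, ρ, T => tsemQF η φ (shiftA ρ 1) T
  | .untl φ₁ φ₂, ρ, T =>
      ⨆ i : ℕ, min (tsemQF η φ₂ (shiftA ρ i) T)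
        (prefMin (fun j => tsemQF η φ₁ (shiftA ρ j) T) i)
  | .untlD d φ₁ φ₂, ρ, T =>
      ⨆ i : ℕ, min (η d i * tsemQF η φ₂ (shiftA ρ i) T)
        (prefMin (fun j => η d j * tsemQF η φ₁ (shiftA ρ j) T) i)

/-- Satisfaction value `⟦ψ⟧_Π^T` of HyperLTL_temp formulas. -/
def tsem [DecidableEq Var] (η : D → ℕ → ℝ) :
    TForm AP Var D → (Var → Trace AP) → Set (Trace AP) → ℝ
  | .qf φ, ρ, T => tsemQF η φ ρ T
  | .ex π ψ, ρ, T => sSup ((fun t => tsem η ψ (Function.update ρ π t) T) '' T)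
  | .all π ψ, ρ, T => sInf ((fun t => tsem η ψ (Function.update ρ π t) T) '' T)

/-- The variables occurring in a quantifier-free formula. -/
def varsTQF : TQF AP Var D → Set Var
  | .atom _ π => {π}
  | .neg φ => varsTQF φ
  | .or φ₁ φ₂ => varsTQF φ₁ ∪ varsTQF φ₂
  | .next φ => varsTQF φ
  | .untl φ₁ φ₂ => varsTQF φ₁ ∪ varsTQF φ₂
  | .untlD _ φ₁ φ₂ => varsTQF φ₁ ∪ varsTQF φ₂

/-- The free variables of a HyperLTL_temp formula. -/
def freeVars : TForm AP Var D → Set Var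
  | .qf φ => varsTQF φ
  | .ex π ψ => freeVars ψ \ {π}
  | .all π ψ => freeVars ψ \ {π}

/-- A weighted Kripke structure over `AP`: a finite state set, a finite weight set
`W ⊆ [0,1]`, initial states, a total transition relation, and a weighted labeling. -/
structure Kripke (AP : Type) where
  S : Type
  [finS : Fintype S]
  W : Set ℝ
  Wfin : W.Finite
  Wsub : W ⊆ Set.Icc (0:ℝ) 1
  init : Set S
  tr : S → S → Prop
  total : ∀ s, ∃ s', tr s s'
  L : S → AP → unitInterval
  L_mem : ∀ s p, ((L s p : ℝ)) ∈ W

/-- The set `𝕋(K)` of traces of a Kripke structure. -/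
def Kripke.Traces {AP : Type} (K : Kripke AP) : Set (Trace AP) :=
  {t | ∃ s : ℕ → K.S, s 0 ∈ K.init ∧ (∀ i, K.tr (s i) (s (i + 1))) ∧
        ∀ i p, t i p = K.L (s i) p}

/-- The set `𝕃(K)` of lassos of a Kripke structure. -/
def Kripke.Lassos {AP : Type} (K : Kripke AP) : Set (Trace AP) :=
  {t | t ∈ K.Traces ∧ IsLasso t}

/-- A nondeterministic Büchi automaton over the alphabet `Alph`. -/
structure NBA (Alph : Type) where
  Q : Type
  [finQ : Fintype Q]
  init : Set Q
  δ : Q → Alph → Set Q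
  acc : Set Q

/-- Büchi acceptance: some run visits the accepting set infinitely often. -/
def NBA.Accepts {Alph : Type} (A : NBA Alph) (w : ℕ → Alph) : Prop :=
  ∃ r : ℕ → A.Q, r 0 ∈ A.init ∧ (∀ i, r (i + 1) ∈ A.δ (r i) (w i)) ∧
    ∀ N, ∃ n, N ≤ n ∧ r n ∈ A.acc

/-- The encoding `t_Π` of a trace assignment `[π₁ ↦ t₁, …, π_k ↦ t_k]` as a single trace
over the atomic propositions `AP_{≤k}`, identified with `AP × Fin k`. -/
def encode {AP : Type} {k : ℕ} (ts : Fin k → Trace AP) : Trace (AP × Fin k) :=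
  fun n q => ts q.2 n q.1

/-!
A trace assignment is an infinite word over the alphabet of letters `Var → AP → [0,1]`. Colour the
finite words with finitely many colours, and call two infinite words block-equivalent if they
factor into nonempty blocks of pairwise equal colours. For every formula and every `ε > 0` some
colouring determines the value of the formula up to `ε` on block-equivalent words: atoms are
discretised, an until needs the colours of the suffixes of a block, a discounted until is a uniform
limit of finite maxima, and a quantifier over the traces of `K` needs the colours of all extensions
of a block by path segments of `K` together with their end points.

Now let the assignment be ultimately periodic and let `t` be a trace of `K`. By Ramsey's theorem the
word extended by `t` can be cut into blocks that, after the first one, all have the same colour,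
start in the same state of `K` and start at the same phase of the assignment. Repeating the second
block forever gives a lasso of `K` that is block-equivalent to `t`. Hence the lassos attain the
values of a formula on the traces up to every `ε > 0`, and suprema and infima agree.
-/

open Filter Topology

section Words

variable {A Q R : Type*}

/-- The suffix of the infinite word `w` that starts at position `i`. -/
def suffix (w : ℕ → A) (i : ℕ) : ℕ → A := fun n => w (n + i)

/-- The finite word `w i, …, w (j - 1)`; it is empty if `j ≤ i`. -/
def factor (w : ℕ → A) (i j : ℕ) : List A := (List.Ico i j).map w

@[simp]
theorem length_factor (w : ℕ → A) (i j : ℕ) : (factor w i j).length = j - i := by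
  simp [factor]

@[simp]
theorem getElem_factor (w : ℕ → A) (i j l : ℕ) (hl : l < (factor w i j).length) :
    (factor w i j)[l] = w (i + l) := by
  simp [factor, List.Ico]

theorem suffix_suffix (w : ℕ → A) (i j : ℕ) : suffix (suffix w i) j = suffix w (i + j) :=
  funext fun n => congrArg w (by omega)

theorem factor_congr {v w : ℕ → A} {i j i' j' : ℕ} (hlen : j - i = j' - i')
    (h : ∀ l < j - i, v (i + l) = w (i' + l)) : factor v i j = factor w i' j' :=
  List.ext_getElem (by simpa using hlen) fun l hl _ => by
    simpa using h l (by simpa using hl)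

theorem factor_suffix (w : ℕ → A) (i a b : ℕ) :
    factor (suffix w i) a b = factor w (a + i) (b + i) :=
  factor_congr (by omega) fun l _ => congrArg w (by omega)

theorem drop_factor (w : ℕ → A) (i j l : ℕ) : (factor w i j).drop l = factor w (i + l) j :=
  List.ext_getElem (by simp; omega) fun _ _ _ => by simp [add_assoc]

/-- Cut positions: block `k` of the factorization of an infinite word with cuts `m` occupies the
positions from `m k` to `m (k + 1) - 1`. -/
structure IsCut (m : ℕ → ℕ) : Prop where
  strictMono : StrictMono m
  zero : m 0 = 0

theorem IsCut.lt_succ {m : ℕ → ℕ} (hm : IsCut m) (k : ℕ) : m k < m (k + 1) :=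
  hm.strictMono k.lt_succ_self

theorem IsCut.exists_block {m : ℕ → ℕ} (hm : IsCut m) (i : ℕ) :
    ∃ k, m k ≤ i ∧ i < m (k + 1) := by
  have hcover : ⋃ k, Set.Ico (m k) (m (k + 1)) = Set.Ici (m 0) :=
    iUnion_Ico_map_succ_eq_Ici (fun k => hm.strictMono.monotone k.zero_le)
      hm.strictMono.not_bddAbove_range_of_isSuccArchimedean
  have hi : i ∈ ⋃ k, Set.Ico (m k) (m (k + 1)) := by simp [hcover, hm.zero]
  simpa using hi

theorem IsCut.block_unique {m : ℕ → ℕ} (hm : IsCut m) {i k l : ℕ} (hk : m k ≤ i)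
    (hk' : i < m (k + 1)) (hl : m l ≤ i) (hl' : i < m (l + 1)) : k = l := by
  have h₁ := hm.strictMono.lt_iff_lt.1 (hk.trans_lt hl')
  have h₂ := hm.strictMono.lt_iff_lt.1 (hl.trans_lt hk')
  omega

theorem IsCut.exists_glue {m : ℕ → ℕ} (hm : IsCut m) (g : ℕ → ℕ → A)
    (hg : ∀ k, g k (m (k + 1) - m k) = g (k + 1) 0) :
    ∃ s : ℕ → A, ∀ k, ∀ j ≤ m (k + 1) - m k, s (m k + j) = g k j := by
  choose b hb hb' using hm.exists_block
  let s : ℕ → A := fun i => g (b i) (i - m (b i))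
  have hs : ∀ k, ∀ j < m (k + 1) - m k, s (m k + j) = g k j := fun k j hj => by
    have hbk : b (m k + j) = k := hm.block_unique (hb _) (hb' _) (by omega) (by omega)
    simp only [s, hbk, Nat.add_sub_cancel_left]
  refine ⟨s, fun k j hj => ?_⟩
  rcases hj.lt_or_eq with hj | rfl
  · exact hs k j hj
  · have hlt := hm.lt_succ k
    have hlt' := hm.lt_succ (k + 1)
    rw [hg, ← hs (k + 1) 0 (by omega)]
    congr 1
    omega

/-- The cut positions `0, m 0, m 1, …`. -/
def prependZero (m : ℕ → ℕ) : ℕ → ℕ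
  | 0 => 0
  | k + 1 => m k

theorem isCut_prependZero {m : ℕ → ℕ} (hm : StrictMono m) (h0 : 0 < m 0) :
    IsCut (prependZero m) where
  strictMono := strictMono_nat_of_lt_succ fun
    | 0 => h0
    | k + 1 => hm k.lt_succ_self
  zero := rfl

/-- The infinite words `v` and `w`, cut at the positions `m` and `n` respectively, have blocks of
pairwise equal colours. -/
structure SameBlocks (τ : List A → Q) (v : ℕ → A) (m : ℕ → ℕ) (w : ℕ → A) (n : ℕ → ℕ) :
    Prop where
  left : IsCut m
  right : IsCut n
  color_eq : ∀ k, τ (factor v (m k) (m (k + 1))) = τ (factor w (n k) (n (k + 1)))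

/-- The infinite words `v` and `w` factor into nonempty blocks of pairwise equal colours. -/
def BlockEquiv (τ : List A → Q) (v w : ℕ → A) : Prop :=
  ∃ m n, SameBlocks τ v m w n

theorem BlockEquiv.symm {τ : List A → Q} {v w : ℕ → A} :
    BlockEquiv τ v w → BlockEquiv τ w v
  | ⟨m, n, h⟩ => ⟨n, m, h.right, h.left, fun k => (h.color_eq k).symm⟩

theorem SameBlocks.comp {τ : List A → Q} {v w : ℕ → A} {m n : ℕ → ℕ} (g : Q → R)
    (h : SameBlocks τ v m w n) : SameBlocks (fun u => g (τ u)) v m w n :=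
  ⟨h.left, h.right, fun k => congrArg g (h.color_eq k)⟩

theorem BlockEquiv.comp {τ : List A → Q} {v w : ℕ → A} (g : Q → R) :
    BlockEquiv τ v w → BlockEquiv (fun u => g (τ u)) v w
  | ⟨m, n, h⟩ => ⟨m, n, h.comp g⟩

theorem SameBlocks.blockEquiv_suffix {τ : List A → Q} {v w : ℕ → A} {m n : ℕ → ℕ}
    (h : SameBlocks τ v m w n) {k i j : ℕ} (hi : i < m (k + 1)) (hj : j < n (k + 1))
    (hτ : τ (factor v i (m (k + 1))) = τ (factor w j (n (k + 1)))) :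
    BlockEquiv τ (suffix v i) (suffix w j) := by
  have tail {m : ℕ → ℕ} {i : ℕ} (hm : StrictMono m) (hi : i < m (k + 1)) (l : ℕ) :
      i < m (k + 1 + l) ∧ m (k + 1 + l) < m (k + 1 + (l + 1)) :=
    ⟨hi.trans_le (hm.monotone (by omega)), hm (by omega)⟩
  have isCut {m : ℕ → ℕ} {i : ℕ} (hm : StrictMono m) (hi : i < m (k + 1)) :
      IsCut (prependZero fun l => m (k + 1 + l) - i) := by
    refine isCut_prependZero (strictMono_nat_of_lt_succ fun l => ?_) ?_
    · have := tail hm hi l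
      omega
    · exact Nat.sub_pos_of_lt hi
  refine ⟨_, _, isCut h.left.strictMono hi, isCut h.right.strictMono hj, fun l => ?_⟩
  simp only [factor_suffix]
  cases l with
  | zero => simpa [prependZero, Nat.sub_add_cancel hi.le, Nat.sub_add_cancel hj.le] using hτ
  | succ l =>
    have hv := tail h.left.strictMono hi
    have hw := tail h.right.strictMono hj
    simp only [prependZero, Nat.sub_add_cancel (hv _).1.le, Nat.sub_add_cancel (hw _).1.le]
    exact h.color_eq (k + 1 + l)

/-- The colouring for the next operator. Blocks of length `1` are singled out because they disappear
when the first letter of the word is dropped. -/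
def nextColoring (τ : List A → Q) (u : List A) : Prop × Q × Q :=
  (u.length = 1, τ u, τ (u.drop 1))

theorem BlockEquiv.suffix_one {τ : List A → Q} {v w : ℕ → A}
    (h : BlockEquiv (nextColoring τ) v w) : BlockEquiv τ (suffix v 1) (suffix w 1) := by
  obtain ⟨m, n, h⟩ := h
  have hτ : SameBlocks τ v m w n := h.comp fun q => q.2.1
  have hm : 0 < m 1 := h.left.zero ▸ h.left.strictMono one_pos
  have hn : 0 < n 1 := h.right.zero ▸ h.right.strictMono one_pos
  have hfirst := h.color_eq 0
  simp only [nextColoring, length_factor, drop_factor, h.left.zero, h.right.zero, zero_add,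
    Nat.sub_zero, Prod.mk.injEq, eq_iff_iff] at hfirst
  obtain ⟨hlen, -, hsuffix⟩ := hfirst
  by_cases hm1 : m 1 = 1
  · have hsecond := hτ.color_eq 1
    have hm2 := h.left.strictMono (Nat.lt_succ_self 1)
    have hn2 := h.right.strictMono (Nat.lt_succ_self 1)
    rw [hm1] at hm2 hsecond
    rw [hlen.1 hm1] at hn2 hsecond
    exact hτ.blockEquiv_suffix hm2 hn2 hsecond
  · have hn1 : n 1 ≠ 1 := fun hn1 => hm1 (hlen.2 hn1)
    exact hτ.blockEquiv_suffix (k := 0) (by rw [zero_add]; omega) (by rw [zero_add]; omega) hsuffix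

/-- The colours of the suffixes of `u` that start before position `i`. -/
def suffixColors (τ : List A → Q) (u : List A) (i : ℕ) : Set Q :=
  (fun j => τ (u.drop j)) '' Set.Iio i

/-- The colouring for the until operator. The last component records, for each position of the
block, the colour of the suffix there together with the colours of all longer suffixes, so that the
minima over the positions before it can be compared too. -/
def untilColoring (τ : List A → Q) (u : List A) : Q × Set Q × Set (Q × Set Q) :=
  (τ u, suffixColors τ u u.length,
    (fun i => (τ (u.drop i), suffixColors τ u i)) '' Set.Iio u.length)

theorem mem_suffixColors_factor {τ : List A → Q} {w : ℕ → A} {a b i : ℕ} {q : Q} :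
    q ∈ suffixColors τ (factor w a b) i ↔ ∃ j < i, τ (factor w (a + j) b) = q := by
  simp [suffixColors, drop_factor]

theorem BlockEquiv.exists_position {τ : List A → Q} {v w : ℕ → A}
    (h : BlockEquiv (untilColoring τ) v w) (i : ℕ) :
    ∃ j, BlockEquiv τ (suffix v i) (suffix w j) ∧
      ∀ j' < j, ∃ i' < i, BlockEquiv τ (suffix v i') (suffix w j') := by
  obtain ⟨m, n, h⟩ := h
  have hτ : SameBlocks τ v m w n := h.comp fun q => q.1
  have hall : SameBlocks (fun u => suffixColors τ u u.length) v m w n := h.comp fun q => q.2.1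
  obtain ⟨k, hk, hik⟩ := h.left.exists_block i
  obtain ⟨i, rfl⟩ := Nat.exists_eq_add_of_le hk
  have hpositions := (h.comp fun q => q.2.2).color_eq k
  simp only [untilColoring, length_factor] at hpositions
  obtain ⟨j, hjk, hj⟩ := hpositions.subset
    (Set.mem_image_of_mem _ (Set.mem_Iio.2 (by omega : i < m (k + 1) - m k)))
  rw [Set.mem_Iio] at hjk
  simp only [drop_factor, Prod.mk.injEq] at hj
  obtain ⟨hsuffix, hlonger⟩ := hj
  refine ⟨n k + j, hτ.blockEquiv_suffix hik (by omega) hsuffix.symm, fun j' hj' => ?_⟩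
  obtain ⟨l, hl, hjl⟩ := h.right.exists_block j'
  obtain ⟨j', rfl⟩ := Nat.exists_eq_add_of_le hl
  have hnl : n l < n (k + 1) := by omega
  have hlk : l ≤ k := Nat.lt_succ_iff.1 (h.right.strictMono.lt_iff_lt.1 hnl)
  suffices hi' : ∃ i', m l + i' < m k + i ∧ m l + i' < m (l + 1) ∧
      τ (factor v (m l + i') (m (l + 1))) = τ (factor w (n l + j') (n (l + 1))) by
    obtain ⟨i', hlt, hblock, heq⟩ := hi'
    exact ⟨m l + i', hlt, hτ.blockEquiv_suffix hblock hjl heq⟩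
  rcases hlk.lt_or_eq with hlk | rfl
  · obtain ⟨i', hi', heq⟩ := mem_suffixColors_factor.1 ((hall.color_eq l).superset
      (mem_suffixColors_factor.2 ⟨j', by rw [length_factor]; omega, rfl⟩))
    rw [length_factor] at hi'
    have hmono : m (l + 1) ≤ m k := h.left.strictMono.monotone hlk
    exact ⟨i', by omega, by omega, heq⟩
  · obtain ⟨i', hi', heq⟩ := mem_suffixColors_factor.1 (hlonger.subset
      (mem_suffixColors_factor.2 ⟨j', by omega, rfl⟩))
    exact ⟨i', by omega, by omega, heq⟩

end Words

section Paths

variable {A B Q S : Type*}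

/-- Infinite paths of the transition relation `r` that start in `I`. -/
structure IsPath (I : Set S) (r : S → S → Prop) (s : ℕ → S) : Prop where
  init : s 0 ∈ I
  step : ∀ i, r (s i) (s (i + 1))

/-- The colouring for a quantifier over the paths of `r`, where `c` extends a letter by a state:
the colours of all extensions of the block by path segments, with the end points of the segments. -/
def pathColoring (r : S → S → Prop) (c : A → S → B) (τ : List B → Q) (u : List A) :
    Set (Q × S × S) :=
  {x | ∃ s : ℕ → S, (∀ i < u.length, r (s i) (s (i + 1))) ∧
    (τ (u.mapIdx fun i a => c a (s i)), s 0, s u.length) = x}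

theorem mapIdx_factor {c : A → S → B} {w : ℕ → A} {s g : ℕ → S} {a b : ℕ}
    (h : ∀ i < b - a, s (a + i) = g i) :
    (factor w a b).mapIdx (fun i x => c x (g i)) = factor (fun n => c (w n) (s n)) a b :=
  List.ext_getElem (by simp) fun l hl _ => by simp [h l (by simpa using hl)]

theorem BlockEquiv.exists_path {I : Set S} {r : S → S → Prop} {c : A → S → B} {τ : List B → Q}
    {v w : ℕ → A} (h : BlockEquiv (pathColoring r c τ) v w) {s : ℕ → S} (hs : IsPath I r s) :
    ∃ s', IsPath I r s' ∧
      BlockEquiv τ (fun n => c (v n) (s n)) (fun n => c (w n) (s' n)) := by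
  obtain ⟨m, n, h⟩ := h
  have hseg (k : ℕ) : (τ (factor (fun n => c (v n) (s n)) (m k) (m (k + 1))), s (m k),
      s (m (k + 1))) ∈ pathColoring r c τ (factor v (m k) (m (k + 1))) := by
    refine ⟨fun i => s (m k + i), fun i _ => hs.step (m k + i), ?_⟩
    rw [mapIdx_factor fun _ _ => rfl]
    simp only [length_factor, Nat.add_sub_cancel' (h.left.lt_succ k).le, add_zero]
  replace hseg k := (h.color_eq k).subset (hseg k)
  simp only [pathColoring, length_factor, Set.mem_ofPred_eq, Prod.mk.injEq] at hseg
  choose g hstep hcolor hfirst hlast using hseg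
  obtain ⟨s', hs'⟩ := h.right.exists_glue g fun k => (hlast k).trans (hfirst (k + 1)).symm
  refine ⟨s', ⟨?_, fun i => ?_⟩, m, n, h.left, h.right, fun k => ?_⟩
  · have hzero : s' 0 = s 0 := by
      simpa [h.right.zero, h.left.zero, hfirst] using hs' 0 0 (Nat.zero_le _)
    exact hzero ▸ hs.init
  · obtain ⟨k, hk, hik⟩ := h.right.exists_block i
    obtain ⟨j, rfl⟩ := Nat.exists_eq_add_of_le hk
    rw [add_assoc, hs' k j (by omega), hs' k (j + 1) (by omega)]
    exact hstep k j (by omega)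
  · rw [← hcolor, mapIdx_factor fun i hi => hs' k i hi.le]

end Paths

section UltimatelyPeriodic

variable {A B Q S : Type*}

/-- Ramsey's theorem for pairs; the colour is a double limit along a nonprincipal ultrafilter. -/
theorem exists_strictMono_forall_lt_eq [Finite Q] (c : ℕ → ℕ → Q) :
    ∃ (q : Q) (n : ℕ → ℕ), StrictMono n ∧ ∀ i j, i < j → c (n i) (n j) = q := by
  let U : Ultrafilter ℕ := hyperfilter ℕ
  have hlim (h : ℕ → Q) : ∃ q, ∀ᶠ i in U, h i = q :=
    Ultrafilter.eventually_exists_iff.1 (.of_forall fun i => ⟨h i, rfl⟩)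
  have hgt (i : ℕ) : ∀ᶠ j in U, i < j :=
    (eventually_gt_atTop i).filter_mono Nat.hyperfilter_le_atTop
  choose d hd using fun i => hlim (c i)
  obtain ⟨q, hq⟩ := hlim d
  obtain ⟨n, -, hn⟩ := exists_seq_of_forall_finset_exists (d · = q)
    (fun i j => i < j ∧ c i j = q) fun F hF => by
      have hF' : ∀ᶠ j in U, ∀ i ∈ F, i < j ∧ c i j = q :=
        (eventually_all_finset F).2 fun i hi => (hgt i).and (hF i hi ▸ hd i)
      exact (hq.and hF').exists
  exact ⟨q, n, strictMono_nat_of_lt_succ fun k => (hn k (k + 1) k.lt_succ_self).1,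
    fun i j hij => (hn i j hij).2⟩

/-- Infinite words of the form `u·v^ω`; for traces this is `IsLasso`. -/
def IsUltimatelyPeriodic (w : ℕ → A) : Prop :=
  ∃ N p, 0 < p ∧ ∀ n, N ≤ n → w (n + p) = w n

theorem IsUltimatelyPeriodic.comp {w : ℕ → A} (f : A → B) :
    IsUltimatelyPeriodic w → IsUltimatelyPeriodic fun n => f (w n)
  | ⟨N, p, hp, h⟩ => ⟨N, p, hp, fun n hn => congrArg f (h n hn)⟩

theorem apply_add_mul_of_period {w : ℕ → A} {N p : ℕ} (h : ∀ n, N ≤ n → w (n + p) = w n)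
    {n : ℕ} (hn : N ≤ n) (k : ℕ) : w (n + k * p) = w n := by
  induction k with
  | zero => simp
  | succ k ih => rw [Nat.succ_mul, ← add_assoc, h _ (by omega), ih]

theorem apply_add_of_dvd_of_period {w : ℕ → A} {N p q : ℕ} (h : ∀ n, N ≤ n → w (n + p) = w n)
    (hpq : p ∣ q) {n : ℕ} (hn : N ≤ n) : w (n + q) = w n := by
  obtain ⟨k, rfl⟩ := hpq
  rw [mul_comm]
  exact apply_add_mul_of_period h hn k

theorem isUltimatelyPeriodic_pi {ι : Type*} [Finite ι] {w : ι → ℕ → A}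
    (hw : ∀ i, IsUltimatelyPeriodic (w i)) : IsUltimatelyPeriodic fun n i => w i n := by
  choose N p hp h using hw
  cases nonempty_fintype ι
  exact ⟨Finset.univ.sup N, ∏ i, p i, Finset.prod_pos fun i _ => hp i, fun n hn => funext fun i =>
    apply_add_of_dvd_of_period (h i) (Finset.dvd_prod_of_mem p (Finset.mem_univ i))
      ((Finset.le_sup (Finset.mem_univ i)).trans hn)⟩

/-- The walk `0, 1, …, a + p - 1, a, a + 1, …, a + p - 1, a, …`. -/
def loopIndex (a p i : ℕ) : ℕ :=
  (fun x => if x + 1 = a + p then a else x + 1)^[i] 0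

theorem loopIndex_succ (a p i : ℕ) : loopIndex a p (i + 1) =
    if loopIndex a p i + 1 = a + p then a else loopIndex a p i + 1 :=
  Function.iterate_succ_apply' _ _ _

theorem loopIndex_of_lt {a p i : ℕ} (hi : i < a + p) : loopIndex a p i = i := by
  induction i with
  | zero => rfl
  | succ i ih => rw [loopIndex_succ, ih (by omega), if_neg (by omega)]

theorem loopIndex_add_period {a p n : ℕ} (hp : 0 < p) (hn : a ≤ n) :
    loopIndex a p (n + p) = loopIndex a p n := by
  induction n, hn using Nat.le_induction with
  | base =>
    obtain ⟨p, rfl⟩ := Nat.exists_eq_add_of_lt hp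
    rw [loopIndex_of_lt (by omega : a < _), ← add_assoc, loopIndex_succ,
      loopIndex_of_lt (by omega), if_pos (by omega)]
  | succ n _ ih => rw [Nat.add_right_comm, loopIndex_succ, loopIndex_succ, ih]

theorem IsPath.loop {I : Set S} {r : S → S → Prop} {s : ℕ → S} (hs : IsPath I r s) {a p : ℕ}
    (hloop : s (a + p) = s a) : IsPath I r fun i => s (loopIndex a p i) := by
  refine ⟨hs.init, fun i => ?_⟩
  have hstep := hs.step (loopIndex a p i)
  rw [loopIndex_succ]
  split_ifs with h
  · rwa [h, hloop] at hstep
  · exact hstep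

theorem blockEquiv_of_repeat {τ : List A → Q} {v w : ℕ → A} {n : ℕ → ℕ} {q : Q}
    (hn : StrictMono n) (h0 : 0 < n 0) (hq : ∀ k, τ (factor v (n k) (n (k + 1))) = q)
    (hvw : ∀ i < n 1, v i = w i) (hw : ∀ i, n 0 ≤ i → w (i + (n 1 - n 0)) = w i) :
    BlockEquiv τ v w := by
  have hlt : n 0 < n 1 := hn one_pos
  set p := n 1 - n 0
  have hcut : StrictMono fun k => n 0 + k * p := fun k l hkl =>
    Nat.add_lt_add_left (Nat.mul_lt_mul_of_pos_right hkl (by omega)) _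
  have hrepeat (k : ℕ) :
      factor w (n 0 + k * p) (n 0 + (k + 1) * p) = factor v (n 0) (n 1) := by
    refine factor_congr (by rw [Nat.succ_mul]; omega) fun l hl => ?_
    rw [Nat.succ_mul] at hl
    rw [add_right_comm, apply_add_mul_of_period hw (by omega), hvw _ (by omega)]
  refine ⟨_, _, isCut_prependZero hn h0, isCut_prependZero hcut (by simpa using h0), fun k => ?_⟩
  cases k with
  | zero =>
    simp only [prependZero, zero_mul, add_zero]
    exact congrArg τ (factor_congr rfl fun l hl => hvw _ (by omega))
  | succ k => simp only [prependZero, hrepeat, hq]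

theorem IsUltimatelyPeriodic.exists_blockEquiv_path [Finite Q] [Finite S] {I : Set S}
    {r : S → S → Prop} {w : ℕ → A} (hw : IsUltimatelyPeriodic w) (c : A → S → B)
    (τ : List B → Q) {s : ℕ → S} (hs : IsPath I r s) :
    ∃ s', IsPath I r s' ∧ IsUltimatelyPeriodic s' ∧
      BlockEquiv τ (fun n => c (w n) (s n)) (fun n => c (w n) (s' n)) := by
  obtain ⟨N, d, hd, hw⟩ := hw
  have : NeZero d := ⟨hd.ne'⟩
  obtain ⟨⟨q, x, e⟩, n, hn, hcolor⟩ := exists_strictMono_forall_lt_eq fun i j =>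
    (τ (factor (fun n => c (w n) (s n)) i j), s i, Fin.ofNat d i)
  simp only [Prod.mk.injEq] at hcolor
  let cut : ℕ → ℕ := fun k => n (N + 1 + k)
  have hcut : StrictMono cut := fun k l hkl => hn (by omega)
  replace hcolor (k : ℕ) := hcolor (N + 1 + k) (N + 1 + (k + 1)) (by omega)
  have hN : N < cut 0 := hn.le_apply (x := N + 1)
  have hlt : cut 0 < cut 1 := hcut one_pos
  obtain ⟨p, hp⟩ := Nat.exists_eq_add_of_le hlt.le
  have hloop : s (cut 0 + p) = s (cut 0) := hp ▸ (hcolor 1).2.1.trans (hcolor 0).2.1.symm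
  have hdvd : d ∣ p := by
    have hmod : cut 1 % d = cut 0 % d :=
      congrArg Fin.val ((hcolor 1).2.2.trans (hcolor 0).2.2.symm)
    rw [hp] at hmod
    simpa using Nat.dvd_of_mod_eq_zero (Nat.sub_mod_eq_zero_of_mod_eq hmod)
  refine ⟨fun i => s (loopIndex (cut 0) p i), hs.loop hloop,
    ⟨cut 0, p, by omega, fun i hi => congrArg s (loopIndex_add_period (by omega) hi)⟩,
    blockEquiv_of_repeat hcut (by omega) (fun k => (hcolor k).1)
      (fun i hi => by simp only [loopIndex_of_lt (by omega : i < cut 0 + p)]) fun i hi => ?_⟩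
  have hp0 : 0 < p := by omega
  have hNi : N ≤ i := hN.le.trans hi
  simp only [hp, Nat.add_sub_cancel_left, loopIndex_add_period hp0 hi,
    apply_add_of_dvd_of_period hw hdvd hNi]

end UltimatelyPeriodic

section ApproxRegular

variable {A B : Type*} {f g : (ℕ → A) → ℝ}

/-- The values of `f` are determined, up to any `ε > 0`, by the colours of the blocks of the word
for some colouring with finitely many colours. A one-sided inequality suffices because
`BlockEquiv` is symmetric. -/
def ApproxRegular (f : (ℕ → A) → ℝ) : Prop :=
  ∀ ε > 0, ∃ (Q : Type) (_ : Finite Q) (τ : List A → Q),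
    ∀ v w, BlockEquiv τ v w → f v ≤ f w + ε

theorem ApproxRegular.exists_common_coloring {ι : Type} [Finite ι] {F : ι → (ℕ → A) → ℝ}
    (hF : ∀ i, ApproxRegular (F i)) {ε : ℝ} (hε : 0 < ε) :
    ∃ (Q : Type) (_ : Finite Q) (τ : List A → Q),
      ∀ v w, BlockEquiv τ v w → ∀ i, F i v ≤ F i w + ε := by
  choose Q hQ τ h using fun i => hF i ε hε
  exact ⟨∀ i, Q i, inferInstance, fun u i => τ i u,
    fun v w hvw i => h i v w (hvw.comp fun q => q i)⟩

theorem ApproxRegular.exists_common_coloring₂ (hf : ApproxRegular f) (hg : ApproxRegular g)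
    {ε : ℝ} (hε : 0 < ε) :
    ∃ (Q : Type) (_ : Finite Q) (τ : List A → Q),
      ∀ v w, BlockEquiv τ v w → f v ≤ f w + ε ∧ g v ≤ g w + ε := by
  obtain ⟨Q, hQ, τ, h⟩ := exists_common_coloring (F := fun b => cond b f g)
    (Bool.forall_bool.2 ⟨hg, hf⟩) hε
  exact ⟨Q, hQ, τ, fun v w hvw => (Bool.forall_bool.1 (h v w hvw)).symm⟩

protected theorem ApproxRegular.const (a : ℝ) : ApproxRegular fun _ : ℕ → A => a :=
  fun _ hε => ⟨Unit, inferInstance, fun _ => (), fun _ _ _ => by linarith⟩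

theorem ApproxRegular.const_sub (hf : ApproxRegular f) (a : ℝ) :
    ApproxRegular fun w => a - f w := fun ε hε => by
  obtain ⟨Q, hQ, τ, h⟩ := hf ε hε
  refine ⟨Q, hQ, τ, fun v w hvw => ?_⟩
  linarith [h w v hvw.symm]

theorem ApproxRegular.const_mul (hf : ApproxRegular f) {a : ℝ} (ha : 0 ≤ a) :
    ApproxRegular fun w => a * f w := fun ε hε => by
  obtain ⟨Q, hQ, τ, h⟩ := hf (ε / (a + 1)) (by positivity)
  refine ⟨Q, hQ, τ, fun v w hvw => ?_⟩
  calc a * f v ≤ a * (f w + ε / (a + 1)) := mul_le_mul_of_nonneg_left (h v w hvw) ha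
    _ = a * f w + a / (a + 1) * ε := by ring
    _ ≤ a * f w + ε := by
      gcongr
      exact mul_le_of_le_one_left hε.le ((div_le_one (by positivity)).2 (by linarith))

protected theorem ApproxRegular.max (hf : ApproxRegular f) (hg : ApproxRegular g) :
    ApproxRegular fun w => max (f w) (g w) := fun ε hε => by
  obtain ⟨Q, hQ, τ, h⟩ := hf.exists_common_coloring₂ hg hε
  refine ⟨Q, hQ, τ, fun v w hvw => ?_⟩
  rw [← max_add_add_right]
  exact max_le_max (h v w hvw).1 (h v w hvw).2

protected theorem ApproxRegular.min (hf : ApproxRegular f) (hg : ApproxRegular g) :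
    ApproxRegular fun w => min (f w) (g w) := fun ε hε => by
  obtain ⟨Q, hQ, τ, h⟩ := hf.exists_common_coloring₂ hg hε
  refine ⟨Q, hQ, τ, fun v w hvw => ?_⟩
  rw [← min_add_add_right]
  exact min_le_min (h v w hvw).1 (h v w hvw).2

protected theorem ApproxRegular.prefMin {F : ℕ → (ℕ → A) → ℝ} (hF : ∀ j, ApproxRegular (F j))
    (i : ℕ) : ApproxRegular fun w => prefMin (fun j => F j w) i := by
  induction i with
  | zero => exact .const 1
  | succ i ih => exact ih.min (hF i)

theorem BlockEquiv.apply_zero_eq {v w : ℕ → A} {h : A → B}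
    (hvw : BlockEquiv (fun u => u.head?.map h) v w) : h (v 0) = h (w 0) := by
  obtain ⟨m, n, hvw⟩ := hvw
  have head (w : ℕ → A) {n : ℕ → ℕ} (hn : IsCut n) :
      (factor w (n 0) (n 1)).head? = some (w 0) := by
    rw [List.head?_eq_getElem?, List.getElem?_eq_getElem (by simp [hn.lt_succ 0])]
    simp [hn.zero]
  simpa [head v hvw.left, head w hvw.right] using hvw.color_eq 0

theorem approxRegular_apply_zero {h : A → ℝ} {a b : ℝ} (hab : ∀ x, h x ∈ Set.Icc a b) :
    ApproxRegular fun w => h (w 0) := fun ε hε => by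
  have hfloor (x : A) : ⌊h x / ε⌋ ∈ Set.Icc ⌊a / ε⌋ ⌊b / ε⌋ :=
    ⟨Int.floor_mono (by gcongr; exact (hab x).1), Int.floor_mono (by gcongr; exact (hab x).2)⟩
  refine ⟨Option (Set.Icc ⌊a / ε⌋ ⌊b / ε⌋), inferInstance,
    fun u => u.head?.map fun x => ⟨⌊h x / ε⌋, hfloor x⟩, fun v w hvw => ?_⟩
  have hdist : |h (v 0) / ε - h (w 0) / ε| < 1 :=
    Int.abs_sub_lt_one_of_floor_eq_floor (congrArg Subtype.val hvw.apply_zero_eq)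
  rw [← sub_div, abs_div, abs_of_pos hε, div_lt_one hε] at hdist
  linarith [le_abs_self (h (v 0) - h (w 0))]

theorem ApproxRegular.suffix_one (hf : ApproxRegular f) :
    ApproxRegular fun w => f (suffix w 1) := fun ε hε => by
  obtain ⟨Q, hQ, τ, h⟩ := hf ε hε
  exact ⟨Prop × Q × Q, inferInstance, nextColoring τ, fun v w hvw => h _ _ hvw.suffix_one⟩

protected theorem ApproxRegular.suffix (hf : ApproxRegular f) (i : ℕ) :
    ApproxRegular fun w => f (suffix w i) := by
  induction i with
  | zero => exact hf
  | succ i ih => simpa only [suffix_suffix, add_comm 1 i] using ih.suffix_one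

theorem le_prefMin_iff {a : ℕ → ℝ} {c : ℝ} {i : ℕ} :
    c ≤ prefMin a i ↔ c ≤ 1 ∧ ∀ j < i, c ≤ a j := by
  induction i with
  | zero => simp [prefMin]
  | succ i ih => rw [prefMin, le_min_iff, ih, Nat.forall_lt_succ_right, and_assoc]

theorem prefMin_nonneg {a : ℕ → ℝ} (ha : ∀ j, 0 ≤ a j) (i : ℕ) : 0 ≤ prefMin a i :=
  le_prefMin_iff.2 ⟨zero_le_one, fun j _ => ha j⟩

theorem prefMin_le_prefMin_add {a b : ℕ → ℝ} {i j : ℕ} {ε : ℝ} (hε : 0 ≤ ε)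
    (h : ∀ j' < j, ∃ i' < i, a i' ≤ b j' + ε) : prefMin a i ≤ prefMin b j + ε := by
  obtain ⟨hone, ha⟩ := le_prefMin_iff.1 (le_refl (prefMin a i))
  refine sub_le_iff_le_add.1 (le_prefMin_iff.2 ⟨by linarith, fun j' hj' => ?_⟩)
  obtain ⟨i', hi', hle⟩ := h j' hj'
  linarith [ha i' hi']

theorem ApproxRegular.until (hf : ApproxRegular f) (hg : ApproxRegular g)
    (hbdd : BddAbove (Set.range g)) :
    ApproxRegular fun w =>
      ⨆ i, min (g (suffix w i)) (prefMin (fun j => f (suffix w j)) i) := fun ε hε => by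
  obtain ⟨Q, hQ, τ, h⟩ := hf.exists_common_coloring₂ hg hε
  refine ⟨Q × Set Q × Set (Q × Set Q), inferInstance, untilColoring τ,
    fun v w hvw => ciSup_le fun i => ?_⟩
  obtain ⟨j, hij, hbefore⟩ := hvw.exists_position i
  have hpref : prefMin (fun j => f (suffix v j)) i ≤ prefMin (fun j => f (suffix w j)) j + ε :=
    prefMin_le_prefMin_add hε.le fun j' hj' =>
      let ⟨i', hi', hvw'⟩ := hbefore j' hj'
      ⟨i', hi', (h _ _ hvw').1⟩
  have hbdd' : BddAbove (Set.range fun i =>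
      min (g (suffix w i)) (prefMin (fun j => f (suffix w j)) i)) :=
    let ⟨b, hb⟩ := hbdd
    ⟨b, Set.forall_mem_range.2 fun _ => (min_le_left _ _).trans (hb (Set.mem_range_self _))⟩
  calc min (g (suffix v i)) (prefMin (fun j => f (suffix v j)) i)
      ≤ min (g (suffix w j) + ε) (prefMin (fun j => f (suffix w j)) j + ε) :=
        min_le_min (h _ _ hij).2 hpref
    _ = min (g (suffix w j)) (prefMin (fun j => f (suffix w j)) j) + ε := min_add_add_right _ _ _
    _ ≤ _ := add_le_add_left (le_ciSup hbdd' j) ε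

protected theorem ApproxRegular.iSup {F : ℕ → (ℕ → A) → ℝ} {b : ℕ → ℝ}
    (hF : ∀ i, ApproxRegular (F i)) (h0 : ∀ i w, 0 ≤ F i w) (hle : ∀ i w, F i w ≤ b i)
    (hb : Tendsto b atTop (𝓝 0)) : ApproxRegular fun w => ⨆ i, F i w := fun ε hε => by
  obtain ⟨N, hN⟩ := eventually_atTop.1 (hb.eventually (gt_mem_nhds hε))
  obtain ⟨Q, hQ, τ, h⟩ := exists_common_coloring (F := fun i : Fin N => F i) (fun i => hF i) hε
  refine ⟨Q, hQ, τ, fun v w hvw => ciSup_le fun i => ?_⟩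
  rcases lt_or_ge i N with hi | hi
  · have hbdd : BddAbove (Set.range fun i => F i w) :=
      hb.bddAbove_range.range_mono _ fun i => hle i w
    exact (h v w hvw ⟨i, hi⟩).trans (add_le_add_left (le_ciSup hbdd i) ε)
  · have hnonneg : 0 ≤ ⨆ i, F i w := Real.iSup_nonneg fun i => h0 i w
    linarith [hle i v, hN i hi]

theorem ApproxRegular.sSup_paths {S : Type} [Finite S] {f : (ℕ → B) → ℝ} (hf : ApproxRegular f)
    (hbdd : BddAbove (Set.range f)) (I : Set S) (r : S → S → Prop) (c : A → S → B) :
    ApproxRegular fun w => sSup ((fun s => f fun n => c (w n) (s n)) '' {s | IsPath I r s}) :=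
  fun ε hε => by
  obtain ⟨Q, hQ, τ, h⟩ := hf ε hε
  refine ⟨Set (Q × S × S), inferInstance, pathColoring r c τ, fun v w hvw => ?_⟩
  rcases {s | IsPath I r s}.eq_empty_or_nonempty with hempty | hnonempty
  · simp [hempty, hε.le]
  refine csSup_le (hnonempty.image _) (Set.forall_mem_image.2 fun s hs => ?_)
  obtain ⟨s', hs', hvw'⟩ := hvw.exists_path hs
  have hbdd' : BddAbove ((fun s => f fun n => c (w n) (s n)) '' {s | IsPath I r s}) :=
    hbdd.mono (Set.image_subset_iff.2 fun s _ => Set.mem_range_self _)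
  exact (h _ _ hvw').trans (add_le_add_left (le_csSup hbdd' (Set.mem_image_of_mem _ hs')) ε)

theorem ApproxRegular.sInf_paths {S : Type} [Finite S] {f : (ℕ → B) → ℝ} (hf : ApproxRegular f)
    (hbdd : BddBelow (Set.range f)) (I : Set S) (r : S → S → Prop) (c : A → S → B) :
    ApproxRegular fun w => sInf ((fun s => f fun n => c (w n) (s n)) '' {s | IsPath I r s}) := by
  have hneg : ApproxRegular fun v => -f v := by simpa using hf.const_sub 0
  have hbdd' : BddAbove (Set.range fun v => -f v) := by
    simpa [Set.range_comp'] using hbdd.neg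
  simpa [Real.sInf_def, ← Set.image_neg_eq_neg, Set.image_image] using
    (hneg.sSup_paths hbdd' I r c).const_sub 0

end ApproxRegular

section Formulas

variable {η : D → ℕ → ℝ}

theorem iSup_min_mem_Icc {a b : ℕ → ℝ} (ha : ∀ i, a i ∈ Set.Icc (0 : ℝ) 1) (hb : ∀ i, 0 ≤ b i) :
    ⨆ i, min (a i) (b i) ∈ Set.Icc (0 : ℝ) 1 :=
  ⟨Real.iSup_nonneg fun i => le_min (ha i).1 (hb i),
    ciSup_le fun i => (min_le_left _ _).trans (ha i).2⟩

theorem tsemQF_mem_Icc (hη : ∀ d i, η d i ∈ Set.Icc (0 : ℝ) 1) (φ : TQF AP Var D)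
    (ρ : Var → Trace AP) (T : Set (Trace AP)) : tsemQF η φ ρ T ∈ Set.Icc (0 : ℝ) 1 := by
  induction φ generalizing ρ with
  | atom p π => exact (ρ π 0 p).2
  | neg φ ih => exact Set.Icc.one_sub_mem (ih ρ)
  | or φ₁ φ₂ ih₁ ih₂ => exact ⟨(ih₁ ρ).1.trans (le_max_left _ _), max_le (ih₁ ρ).2 (ih₂ ρ).2⟩
  | next _ ih => exact ih _
  | untl φ₁ φ₂ ih₁ ih₂ =>
    exact iSup_min_mem_Icc (fun i => ih₂ _) (prefMin_nonneg fun j => (ih₁ _).1)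
  | untlD d φ₁ φ₂ ih₁ ih₂ =>
    exact iSup_min_mem_Icc (fun i => unitInterval.mul_mem (hη d i) (ih₂ _))
      (prefMin_nonneg fun j => mul_nonneg (hη d j).1 (ih₁ _).1)

theorem tsem_mem_Icc [DecidableEq Var] (hη : ∀ d i, η d i ∈ Set.Icc (0 : ℝ) 1)
    (ψ : TForm AP Var D) (ρ : Var → Trace AP) (T : Set (Trace AP)) :
    tsem η ψ ρ T ∈ Set.Icc (0 : ℝ) 1 := by
  induction ψ generalizing ρ with
  | qf φ => exact tsemQF_mem_Icc hη φ ρ T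
  | ex π ψ ih =>
    exact ⟨Real.sSup_nonneg (Set.forall_mem_image.2 fun t _ => (ih _).1),
      Real.sSup_le (Set.forall_mem_image.2 fun t _ => (ih _).2) zero_le_one⟩
  | all π ψ ih =>
    have hnonneg := Set.forall_mem_image.2 fun t (_ : t ∈ T) => (ih (Function.update ρ π t)).1
    refine ⟨Real.sInf_nonneg hnonneg, ?_⟩
    rcases T.eq_empty_or_nonempty with rfl | ⟨t, ht⟩
    · simp [tsem]
    · exact (csInf_le ⟨0, hnonneg⟩ (Set.mem_image_of_mem _ ht)).trans (ih _).2

theorem tsemQF_congr (φ : TQF AP Var D) {ρ ρ' : Var → Trace AP}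
    (h : ∀ π ∈ varsTQF φ, ρ π = ρ' π) (T T' : Set (Trace AP)) :
    tsemQF η φ ρ T = tsemQF η φ ρ' T' := by
  have shift {V : Set Var} {ρ ρ' : Var → Trace AP} (h : ∀ π ∈ V, ρ π = ρ' π) (i : ℕ) :
      ∀ π ∈ V, shiftA ρ i π = shiftA ρ' i π := fun π hπ =>
    congrArg (fun (t : Trace AP) n => t (n + i)) (h π hπ)
  induction φ generalizing ρ ρ' with
  | atom _ π => simp only [tsemQF, h π rfl]
  | neg _ ih => simp only [tsemQF, ih h]
  | or φ₁ φ₂ ih₁ ih₂ =>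
    simp only [tsemQF, ih₁ fun π hπ => h π (.inl hπ), ih₂ fun π hπ => h π (.inr hπ)]
  | next _ ih => exact ih (shift h 1)
  | untl φ₁ φ₂ ih₁ ih₂ | untlD d φ₁ φ₂ ih₁ ih₂ =>
    simp only [tsemQF, fun i => ih₁ (shift (fun π hπ => h π (.inl hπ)) i),
      fun i => ih₂ (shift (fun π hπ => h π (.inr hπ)) i)]

theorem tsem_congr [DecidableEq Var] (ψ : TForm AP Var D) {ρ ρ' : Var → Trace AP}
    (h : ∀ π ∈ freeVars ψ, ρ π = ρ' π) (T : Set (Trace AP)) :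
    tsem η ψ ρ T = tsem η ψ ρ' T := by
  have update {V : Set Var} {π : Var} {ρ ρ' : Var → Trace AP} (h : ∀ x ∈ V \ {π}, ρ x = ρ' x)
      (t : Trace AP) : ∀ x ∈ V, Function.update ρ π t x = Function.update ρ' π t x := by
    intro x hx
    rcases eq_or_ne x π with rfl | hxπ
    · simp only [Function.update_self]
    · simp only [Function.update_of_ne hxπ, h x ⟨hx, hxπ⟩]
  induction ψ generalizing ρ ρ' with
  | qf φ => exact tsemQF_congr φ h T T
  | ex π ψ ih | all π ψ ih => simp only [tsem, fun t => ih (update h t)]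

theorem finite_varsTQF (φ : TQF AP Var D) : (varsTQF φ).Finite := by
  induction φ with
  | atom _ π => exact Set.finite_singleton π
  | neg _ ih | next _ ih => exact ih
  | or _ _ ih₁ ih₂ | untl _ _ ih₁ ih₂ | untlD _ _ _ ih₁ ih₂ => exact ih₁.union ih₂

theorem finite_freeVars (ψ : TForm AP Var D) : (freeVars ψ).Finite := by
  induction ψ with
  | qf φ => exact finite_varsTQF φ
  | ex π ψ ih | all π ψ ih => exact ih.sdiff

/- A trace assignment is read as an infinite word of letters `Var → AP → unitInterval`; `flip` goes
from words to assignments, and turns `suffix w i` into `shiftA (flip w) i` definitionally. -/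
theorem approxRegular_tsemQF (hη : ∀ d i, η d i ∈ Set.Icc (0 : ℝ) 1)
    (hlim : ∀ d, Tendsto (η d) atTop (𝓝 0)) (φ : TQF AP Var D) (T : Set (Trace AP)) :
    ApproxRegular fun w : ℕ → Var → AP → unitInterval => tsemQF η φ (flip w) T := by
  induction φ with
  | atom p π =>
    exact approxRegular_apply_zero (h := fun x : Var → AP → unitInterval => (x π p : ℝ))
      fun x => (x π p).2
  | neg φ ih => exact ih.const_sub 1
  | or φ₁ φ₂ ih₁ ih₂ => exact ih₁.max ih₂
  | next φ ih => exact ih.suffix_one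
  | untl φ₁ φ₂ ih₁ ih₂ =>
    exact ih₁.until ih₂ ⟨1, Set.forall_mem_range.2 fun w => (tsemQF_mem_Icc hη φ₂ _ T).2⟩
  | untlD d φ₁ φ₂ ih₁ ih₂ =>
    have hpref := ApproxRegular.prefMin fun j => (ih₁.suffix j).const_mul (hη d j).1
    refine .iSup (fun i => ((ih₂.suffix i).const_mul (hη d i).1).min (hpref i))
      (fun i w => ?_) (fun i w => ?_) (hlim d)
    · exact le_min (mul_nonneg (hη d i).1 (tsemQF_mem_Icc hη φ₂ _ T).1)
        (prefMin_nonneg (fun j => mul_nonneg (hη d j).1 (tsemQF_mem_Icc hη φ₁ _ T).1) i)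
    · exact (min_le_left _ _).trans
        (mul_le_of_le_one_right (hη d i).1 (tsemQF_mem_Icc hη φ₂ _ T).2)

theorem Kripke.traces_eq_image (K : Kripke AP) :
    K.Traces = (fun s n => K.L (s n)) '' {s | IsPath K.init K.tr s} := by
  ext t
  constructor
  · rintro ⟨s, hinit, hstep, ht⟩
    exact ⟨s, ⟨hinit, hstep⟩, funext fun n => funext fun p => (ht n p).symm⟩
  · rintro ⟨s, ⟨hinit, hstep⟩, rfl⟩
    exact ⟨s, hinit, hstep, fun _ _ => rfl⟩

variable [DecidableEq Var]

theorem update_flip (w : ℕ → Var → AP → unitInterval) (π : Var) (t : Trace AP) :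
    Function.update (flip w) π t = flip fun n => Function.update (w n) π (t n) := by
  funext x n
  rcases eq_or_ne x π with rfl | hx
  · simp [flip]
  · simp [flip, hx]

theorem approxRegular_tsem (hη : ∀ d i, η d i ∈ Set.Icc (0 : ℝ) 1)
    (hlim : ∀ d, Tendsto (η d) atTop (𝓝 0)) (ψ : TForm AP Var D) (K : Kripke AP) :
    ApproxRegular fun w : ℕ → Var → AP → unitInterval => tsem η ψ (flip w) K.Traces := by
  have := K.finS
  induction ψ with
  | qf φ => exact approxRegular_tsemQF hη hlim φ K.Traces
  | ex π ψ ih =>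
    simpa only [tsem, K.traces_eq_image, Set.image_image, update_flip] using
      ih.sSup_paths ⟨1, Set.forall_mem_range.2 fun w => (tsem_mem_Icc hη ψ _ _).2⟩ K.init K.tr
        fun x s => Function.update x π (K.L s)
  | all π ψ ih =>
    simpa only [tsem, K.traces_eq_image, Set.image_image, update_flip] using
      ih.sInf_paths ⟨0, Set.forall_mem_range.2 fun w => (tsem_mem_Icc hη ψ _ _).1⟩ K.init K.tr
        fun x s => Function.update x π (K.L s)

theorem image_tsem_traces_subset_closure (hη : ∀ d i, η d i ∈ Set.Icc (0 : ℝ) 1)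
    (hlim : ∀ d, Tendsto (η d) atTop (𝓝 0)) {ψ : TForm AP Var D} (K : Kripke AP) {π : Var}
    {ρ : Var → Trace AP} (hρ : ∀ x ∈ freeVars ψ \ {π}, IsLasso (ρ x)) :
    (fun t => tsem η ψ (Function.update ρ π t) K.Traces) '' K.Traces ⊆
      closure ((fun t => tsem η ψ (Function.update ρ π t) K.Traces) '' K.Lassos) := by
  classical
  have := K.finS
  let V := freeVars ψ \ {π}
  have : Finite V := (finite_freeVars ψ).sdiff.to_subtype
  have hperiodic : IsUltimatelyPeriodic fun n (x : V) => ρ x n :=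
    isUltimatelyPeriodic_pi fun x : V => hρ x x.2
  let extend (a : V → AP → unitInterval) (s : K.S) : Var → AP → unitInterval :=
    Function.update (fun x => if hx : x ∈ V then a ⟨x, hx⟩ else 0) π (K.L s)
  have hvalue (s : ℕ → K.S) : tsem η ψ (Function.update ρ π fun n => K.L (s n)) K.Traces =
      tsem η ψ (flip fun n => extend (fun x => ρ x n) (s n)) K.Traces := by
    refine tsem_congr ψ (fun x hx => funext fun n => ?_) K.Traces
    rcases eq_or_ne x π with rfl | hxπ
    · simp [flip, extend]
    · simp [flip, extend, V, hx, hxπ]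
  rw [K.traces_eq_image, Set.image_image, Set.image_subset_iff, ← K.traces_eq_image]
  refine fun s hs => Metric.mem_closure_iff.2 fun ε hε => ?_
  obtain ⟨Q, hQ, τ, hτ⟩ := approxRegular_tsem hη hlim ψ K (ε / 2) (half_pos hε)
  obtain ⟨s', hs', hlasso, hss'⟩ := hperiodic.exists_blockEquiv_path extend τ hs
  refine ⟨_, Set.mem_image_of_mem _ (x := fun n => K.L (s' n))
    ⟨K.traces_eq_image ▸ ⟨s', hs', rfl⟩, hlasso.comp K.L⟩, ?_⟩
  simp only [hvalue, Real.dist_eq]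
  have hle := hτ _ _ hss'
  have hge := hτ _ _ hss'.symm
  exact abs_lt.2 ⟨by linarith, by linarith⟩

theorem isLasso_update {V : Set Var} {π : Var} {ρ : Var → Trace AP}
    (hρ : ∀ x ∈ V \ {π}, IsLasso (ρ x)) {t : Trace AP} (ht : IsLasso t) :
    ∀ x ∈ V, IsLasso (Function.update ρ π t x) := by
  intro x hx
  rcases eq_or_ne x π with rfl | hxπ
  · simpa only [Function.update_self] using ht
  · simpa only [Function.update_of_ne hxπ] using hρ x ⟨hx, hxπ⟩

end Formulas

section Closure

variable {α : Type*} [ConditionallyCompleteLattice α] [TopologicalSpace α] {X Y : Set α}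

theorem csSup_eq_of_subset_of_subset_closure [ClosedIicTopology α] (hXY : X ⊆ Y)
    (hYX : Y ⊆ closure X) (hY : BddAbove Y) : sSup Y = sSup X := by
  rcases X.eq_empty_or_nonempty with rfl | hX
  · rw [closure_empty, Set.subset_empty_iff] at hYX
    rw [hYX]
  · have hlub : IsLUB X (sSup Y) := (isLUB_iff_of_subset_of_subset_closure hXY hYX).2
      (isLUB_csSup (hX.mono hXY) hY)
    exact (hlub.csSup_eq hX).symm

theorem csInf_eq_of_subset_of_subset_closure [ClosedIciTopology α] (hXY : X ⊆ Y)
    (hYX : Y ⊆ closure X) (hY : BddBelow Y) : sInf Y = sInf X :=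
  csSup_eq_of_subset_of_subset_closure (α := αᵒᵈ) hXY hYX hY

end Closure

theorem stmt_7_general {AP Var D : Type} [DecidableEq Var] (η : D → ℕ → ℝ)
    (hη : ∀ d i, η d i ∈ Set.Icc (0 : ℝ) 1) (hlim : ∀ d, Tendsto (η d) atTop (𝓝 0))
    (ψ : TForm AP Var D) (K : Kripke AP) (ρ : Var → Trace AP)
    (hρ : ∀ π ∈ freeVars ψ, IsLasso (ρ π)) :
    tsem η ψ ρ K.Traces = tsem η ψ ρ K.Lassos := by
  induction ψ generalizing ρ with
  | qf φ => exact tsemQF_congr φ (fun _ _ => rfl) K.Traces K.Lassos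
  | ex π ψ ih =>
    have hlassos := Set.image_congr fun t (ht : t ∈ K.Lassos) => ih _ (isLasso_update hρ ht.2)
    simp only [tsem, ← hlassos]
    exact csSup_eq_of_subset_of_subset_closure (Set.image_mono fun _ ht => ht.1)
      (image_tsem_traces_subset_closure hη hlim K hρ)
      ⟨1, Set.forall_mem_image.2 fun _ _ => (tsem_mem_Icc hη ψ _ _).2⟩
  | all π ψ ih =>
    have hlassos := Set.image_congr fun t (ht : t ∈ K.Lassos) => ih _ (isLasso_update hρ ht.2)
    simp only [tsem, ← hlassos]
    exact csInf_eq_of_subset_of_subset_closure (Set.image_mono fun _ ht => ht.1)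
      (image_tsem_traces_subset_closure hη hlim K hρ)
      ⟨0, Set.forall_mem_image.2 fun _ _ => (tsem_mem_Icc hη ψ _ _).1⟩

/-- Corollary: traces = lassos. For every HyperLTL_temp formula `ψ`,
every weighted Kripke structure `K`, and every lasso assignment `Π` (mapping each free
variable of `ψ` to a lasso of `K`), `⟦ψ⟧_Π^{𝕋(K)} = ⟦ψ⟧_Π^{𝕃(K)}`. In particular the two
satisfaction values coincide for closed formulas. -/
theorem stmt_7 {AP Var D : Type} [DecidableEq Var] [Finite D]
    (η : D → ℕ → ℝ) (hη : ∀ d, IsDiscounting (η d))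
    (ψ : TForm AP Var D) (K : Kripke AP)
    (ρ : Var → Trace AP) (hρ : ∀ π ∈ freeVars ψ, ρ π ∈ K.Lassos) :
    tsem η ψ ρ K.Traces = tsem η ψ ρ K.Lassos :=
  stmt_7_general η (fun d => (hη d).2.1) (fun d => (hη d).2.2) ψ K ρ fun π hπ => (hρ π hπ).2

end
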